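/- arXiv:1812.09772 — 2 statements merged into one kernel-verified Lean document; each statement's English description precedes it below -/
import Mathlib

section
/- Let p, q, a, b, c, d ∈ ℤ with a·d − b·c = 1 and a + d > 2, let x₁ ∈ ℝ, and let v₁ = (x₁,0,0), v₂ = (x₂,y₂,z₂), v₃ = (x₃,y₃,z₃) ∈ ℝ³ be linearly independent vectors. Let L = [[1,p,q],[0,a,b],[0,c,d]], and assume there exists A ∈ SL₂(ℤ) such that L·M = M·A, where M is the 3×2 real matrix with columns v₂ and v₃. Let Γ be the group of affine transformations of ℝ³ generated by g = (L, v₁) and the pure translations t₁ = (I, v₂), t₂ = (I, v₃). Then Γ acts freely and properly discontinuously on ℝ³ and the orbit space ℝ³/Γ is compact. -/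
open Matrix

noncomputable section

/-- ℝ³ as the space of triples of reals. -/
abbrev E3 : Type := Fin 3 → ℝ

/-- The group of invertible affine transformations of ℝ³. -/
abbrev AffT : Type := E3 ≃ᵃ[ℝ] E3

/-- `γ` is the affine transformation `x ↦ A x + v` with linear part `A` and vector part `v`. -/
def HasForm (γ : AffT) (A : Matrix (Fin 3) (Fin 3) ℝ) (v : E3) : Prop :=
  ∀ x, γ x = A.mulVec x + v

/-- `γ` is the pure translation by the vector `v`. -/
def IsTranslationBy (γ : AffT) (v : E3) : Prop :=
  ∀ x, γ x = x + v

/-- The group `Γ` acts freely on ℝ³. -/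
def IsFreeAction (Γ : Subgroup AffT) : Prop :=
  ∀ γ ∈ Γ, (∃ x : E3, γ x = x) → γ = 1

/-- The group `Γ` acts properly discontinuously on ℝ³. -/
def IsProperlyDiscontinuous (Γ : Subgroup AffT) : Prop :=
  ∀ K L : Set E3, IsCompact K → IsCompact L →
    {γ : AffT | γ ∈ Γ ∧ ((γ '' K) ∩ L).Nonempty}.Finite

/-- The orbit equivalence relation of `Γ` on ℝ³. -/
def orbitSetoid (Γ : Subgroup AffT) : Setoid E3 where
  r x y := ∃ γ ∈ Γ, γ x = y
  iseqv := by
    constructor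
    · intro x; exact ⟨1, Γ.one_mem, rfl⟩
    · rintro x y ⟨γ, hγ, h⟩
      exact ⟨γ⁻¹, Γ.inv_mem hγ, by rw [← h]; exact γ.symm_apply_apply x⟩
    · rintro x y z ⟨γ, hγ, h⟩ ⟨δ, hδ, h'⟩
      exact ⟨δ * γ, Γ.mul_mem hδ hγ, by simp [← h', ← h]⟩

/-- The orbit space `ℝ³/Γ`, equipped with the quotient topology, is compact. -/
def HasCompactQuotient (Γ : Subgroup AffT) : Prop :=
  CompactSpace (Quotient (orbitSetoid Γ))

/-!
The subgroup `Λ` generated by `v₂` and `v₃` is a lattice in the plane `P` they span, and the linear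
part of `g` preserves `Λ` and acts trivially on `ℝ³ ⧸ P`. Let `f` be the linear form with kernel `P`
and `f v₁ = 1`. Since `g` normalizes the translations by `Λ`, every element of `Γ` has the form
`x ↦ l + gⁿ x` with `l ∈ Λ`, and it shifts `f` by `n`. A fixed point forces `n = 0`, then `l = 0`.
If the element moves a point of `K` into `L`, then `n` lies in a bounded set, and for given `n` the
vector `l` lies in the finite intersection of `Λ` with the compact set `L - gⁿ K`. Finally a power
of `g` brings every point into the slab `0 ≤ f ≤ 1`, on which `Λ` acts with compact quotient.
-/

section SuspensionGroup

variable {k V : Type*} [Ring k] [AddCommGroup V] [Module k V]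

/-- The group of translations by the elements of an additive subgroup. -/
def translationSubgroup (k : Type*) [Ring k] [Module k V] (Λ : AddSubgroup V) :
    Subgroup (V ≃ᵃ[k] V) :=
  (AddSubgroup.toSubgroup Λ).map (AffineEquiv.constVAddHom k V)

/-- The group generated by an affine transformation `g` and the translations by `Λ`. When the
linear part of `g` preserves a lattice `Λ` of a hyperplane and `g` moves that hyperplane off itself,
it is the fundamental group of the suspension (mapping torus) of the induced toral automorphism. -/
def suspensionGroup (g : V ≃ᵃ[k] V) (Λ : AddSubgroup V) : Subgroup (V ≃ᵃ[k] V) :=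
  Subgroup.zpowers g ⊔ translationSubgroup k Λ

theorem mem_translationSubgroup {Λ : AddSubgroup V} {γ : V ≃ᵃ[k] V} :
    γ ∈ translationSubgroup k Λ ↔ ∃ l ∈ Λ, AffineEquiv.constVAdd k V l = γ :=
  Iff.rfl

theorem translationSubgroup_closure (s : Set V) :
    translationSubgroup k (AddSubgroup.closure s) =
      Subgroup.closure (AffineEquiv.constVAdd k V '' s) := by
  rw [translationSubgroup, AddSubgroup.toSubgroup_closure, MonoidHom.map_closure]
  rfl

theorem closure_insert_constVAdd (g : V ≃ᵃ[k] V) (s : Set V) :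
    Subgroup.closure (insert g (AffineEquiv.constVAdd k V '' s)) =
      suspensionGroup g (AddSubgroup.closure s) := by
  rw [Set.insert_eq, Subgroup.closure_union, ← Subgroup.zpowers_eq_closure, suspensionGroup,
    translationSubgroup_closure]

theorem mul_constVAdd_mul_inv (g : V ≃ᵃ[k] V) (l : V) :
    g * AffineEquiv.constVAdd k V l * g⁻¹ = AffineEquiv.constVAdd k V (g.linear l) := by
  rw [mul_inv_eq_iff_eq_mul]
  ext x
  exact g.map_vadd x l

theorem map_conj_translationSubgroup (g : V ≃ᵃ[k] V) (Λ : AddSubgroup V) :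
    (translationSubgroup k Λ).map (MulAut.conj g).toMonoidHom =
      translationSubgroup k (Λ.map (g.linear : V →+ V)) := by
  ext γ
  simp [mem_translationSubgroup, mul_constVAdd_mul_inv]

variable {g : V ≃ᵃ[k] V} {Λ : AddSubgroup V}

theorem mem_suspensionGroup (hgΛ : Λ.map (g.linear : V →+ V) = Λ) {γ : V ≃ᵃ[k] V} :
    γ ∈ suspensionGroup g Λ ↔
      ∃ n : ℤ, ∃ l ∈ Λ, AffineEquiv.constVAdd k V l * g ^ n = γ := by
  have g_mem : g ∈ Subgroup.normalizer (translationSubgroup k Λ) := by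
    rw [Subgroup.mem_normalizer_iff_map_conj_eq]
    exact (map_conj_translationSubgroup g Λ).trans (by rw [hgΛ])
  rw [suspensionGroup, sup_comm, ← SetLike.mem_coe,
    Subgroup.coe_mul_of_right_le_normalizer_left _ _ (Subgroup.zpowers_le.2 g_mem)]
  simp only [Set.mem_mul, SetLike.mem_coe, mem_translationSubgroup, Subgroup.mem_zpowers_iff]
  grind

theorem constVAdd_mul_zpow_mem_suspensionGroup (g : V ≃ᵃ[k] V) {l : V} (hl : l ∈ Λ) (n : ℤ) :
    AffineEquiv.constVAdd k V l * g ^ n ∈ suspensionGroup g Λ :=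
  mul_mem (Subgroup.mem_sup_right (mem_translationSubgroup.2 ⟨l, hl, rfl⟩))
    (Subgroup.mem_sup_left (zpow_mem (Subgroup.mem_zpowers g) n))

variable {f : V →ₗ[k] k}

theorem apply_zpow_apply_eq_add (hfg : ∀ x, f (g x) = f x + 1) (n : ℤ) (x : V) :
    f ((g ^ n) x) = f x + n := by
  have apply_inv (x : V) : f (g⁻¹ x) = f x - 1 :=
    eq_sub_of_add_eq <| (hfg _).symm.trans <| congrArg f (g.apply_symm_apply x)
  induction n generalizing x with
  | zero => simp
  | succ n ih =>
    rw [_root_.zpow_add_one, AffineEquiv.coe_mul, Function.comp_apply, ih, hfg]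
    push_cast
    abel
  | pred n ih =>
    rw [_root_.zpow_sub_one, AffineEquiv.coe_mul, Function.comp_apply, ih, apply_inv]
    push_cast
    abel

theorem comp_apply_eq_of_ker_le_comap {φ : V →ₗ[k] V} (hφ : f.ker ≤ f.ker.comap φ) {u : V}
    (hu : f u = 1) (hφu : f (φ u) = 1) (x : V) : f (φ x) = f x := by
  have sub_mem : x - f x • u ∈ f.ker := by simp [hu]
  have : f (φ (x - f x • u)) = 0 := hφ sub_mem
  simpa [hφu, sub_eq_zero] using this

theorem apply_apply_eq_add_one (hgΛ : Λ.map (g.linear : V →+ V) = Λ)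
    (hf : f.ker = Submodule.span k (Λ : Set V)) (hg₀ : f (g 0) = 1)
    (hlin : f (g.linear (g 0)) = 1) (x : V) : f (g x) = f x + 1 := by
  have ker_le : f.ker ≤ f.ker.comap (g.linear : V →ₗ[k] V) := by
    rw [hf, Submodule.span_le]
    intro l hl
    exact Submodule.subset_span (hgΛ.le (AddSubgroup.mem_map_of_mem _ hl))
  calc f (g x) = f (g.linear x + g 0) := by simpa using congrArg f (g.map_vadd 0 x)
    _ = f (g.linear x) + 1 := by rw [map_add, hg₀]
    _ = f x + 1 := congrArg (· + 1) (comp_apply_eq_of_ker_le_comap ker_le hg₀ hlin x)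

theorem eq_one_of_mem_suspensionGroup_of_apply_eq [CharZero k]
    (hgΛ : Λ.map (g.linear : V →+ V) = Λ) (hΛ : ∀ l ∈ Λ, f l = 0)
    (hfg : ∀ x, f (g x) = f x + 1) {γ : V ≃ᵃ[k] V} (hγ : γ ∈ suspensionGroup g Λ) {x : V}
    (hx : γ x = x) : γ = 1 := by
  obtain ⟨n, l, hl, rfl⟩ := (mem_suspensionGroup hgΛ).1 hγ
  replace hx : l + (g ^ n) x = x := hx
  obtain rfl : n = 0 := by
    simpa [hΛ l hl, apply_zpow_apply_eq_add hfg] using congrArg f hx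
  obtain rfl : l = 0 := by simpa using hx
  simp [AffineEquiv.one_def]

end SuspensionGroup

section Lattice

open scoped Pointwise

theorem isCompact_sub {G : Type*} [TopologicalSpace G] [AddGroup G] [IsTopologicalAddGroup G]
    {s t : Set G} (hs : IsCompact s) (ht : IsCompact t) : IsCompact (s - t) :=
  sub_eq_add_neg s t ▸ hs.add ht.neg

variable {V : Type*} [NormedAddCommGroup V] [NormedSpace ℝ V] [FiniteDimensional ℝ V]

theorem discreteTopology_closure_of_linearIndepOn {s : Set V} (hs : LinearIndepOn ℝ id s) :
    DiscreteTopology (AddSubgroup.closure s) := by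
  let b := Module.Basis.extend hs
  have : Finite (hs.extend (Set.subset_univ s)) := Module.Finite.finite_basis b
  have closure_le : AddSubgroup.closure s ≤ (Submodule.span ℤ (Set.range b)).toAddSubgroup := by
    rw [Submodule.span_int_eq_addSubgroupClosure, Module.Basis.range_extend]
    exact AddSubgroup.closure_mono (hs.subset_extend _)
  exact DiscreteTopology.of_subset
    (inferInstance : DiscreteTopology (Submodule.span ℤ (Set.range b))) closure_le

theorem exists_isCompact_forall_mem_span_add_mem (Λ : AddSubgroup V) :
    ∃ K : Set V, IsCompact K ∧
      ∀ x ∈ Submodule.span ℝ (Λ : Set V), ∃ l ∈ Λ, l + x ∈ K := by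
  obtain ⟨s, hsΛ, hs⟩ := (Submodule.fg_span_iff_fg_span_finset_subset (R := ℝ) (Λ : Set V)).1
    (IsNoetherian.noetherian _)
  refine ⟨parallelepiped ((↑) : s → V), isCompact_Icc.image (by fun_prop), fun x hx => ?_⟩
  rw [hs, ← Subtype.range_coe (s := (s : Set V)), Submodule.mem_span_range_iff_exists_fun] at hx
  obtain ⟨c, rfl⟩ := hx
  refine ⟨∑ i, -⌊c i⌋ • (i : V), sum_mem fun i _ => zsmul_mem (hsΛ i.2) _, ?_⟩
  rw [mem_parallelepiped_iff]
  refine ⟨fun i => Int.fract (c i),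
    ⟨fun i => Int.fract_nonneg _, fun i => (Int.fract_lt_one _).le⟩, ?_⟩
  rw [← Finset.sum_add_distrib]
  refine Finset.sum_congr rfl fun i _ => ?_
  rw [← Int.cast_smul_eq_zsmul ℝ, ← add_smul, Int.cast_neg, neg_add_eq_sub, Int.self_sub_floor]

variable {g : V ≃ᵃ[ℝ] V} {Λ : AddSubgroup V} {f : V →ₗ[ℝ] ℝ}

theorem finite_setOf_mem_suspensionGroup_image_inter_nonempty [DiscreteTopology Λ]
    (hgΛ : Λ.map (g.linear : V →+ V) = Λ) (hΛ : ∀ l ∈ Λ, f l = 0)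
    (hfg : ∀ x, f (g x) = f x + 1) {K L : Set V} (hK : IsCompact K) (hL : IsCompact L) :
    {γ : V ≃ᵃ[ℝ] V | γ ∈ suspensionGroup g Λ ∧ (γ '' K ∩ L).Nonempty}.Finite := by
  let N : Set ℤ := {n | (n : ℝ) ∈ f '' L - f '' K}
  have finite_N : N.Finite := by
    have f_cont : Continuous f := f.continuous_of_finiteDimensional
    exact (Int.isClosedEmbedding_coe_real.isCompact_preimage
      (isCompact_sub (hL.image f_cont) (hK.image f_cont))).finite_of_discrete
  let M (n : ℤ) : Set V := (L - (g ^ n) '' K) ∩ Λ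
  have finite_M (n : ℤ) : (M n).Finite := by
    have : ProperSpace V := FiniteDimensional.proper_real V
    have gn_cont : Continuous (g ^ n) := (g ^ n).continuous_of_finiteDimensional
    exact Metric.finite_isBounded_inter_isClosed DiscreteTopology.isDiscrete
      (isCompact_sub hL (hK.image gn_cont)).isBounded AddSubgroup.isClosed_of_discrete
  refine (finite_N.biUnion fun n _ =>
    (finite_M n).image fun l => AffineEquiv.constVAdd ℝ V l * g ^ n).subset ?_
  rintro γ ⟨hγ, -, ⟨x, hx, rfl⟩, hy⟩
  obtain ⟨n, l, hl, rfl⟩ := (mem_suspensionGroup hgΛ).1 hγ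
  replace hy : l + (g ^ n) x ∈ L := hy
  refine Set.mem_biUnion (x := n) ?_ ⟨l, ⟨?_, hl⟩, rfl⟩
  · refine ⟨_, Set.mem_image_of_mem f hy, _, Set.mem_image_of_mem f hx, ?_⟩
    simp [hΛ l hl, apply_zpow_apply_eq_add hfg]
  · exact ⟨_, hy, _, Set.mem_image_of_mem _ hx, add_sub_cancel_right _ _⟩

theorem exists_isCompact_forall_exists_mem_suspensionGroup
    (hf : f.ker ≤ Submodule.span ℝ (Λ : Set V)) (hfg : ∀ x, f (g x) = f x + 1) :
    ∃ K : Set V, IsCompact K ∧ ∀ x, ∃ γ ∈ suspensionGroup g Λ, γ x ∈ K := by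
  obtain ⟨C, hC, exists_add_mem⟩ := exists_isCompact_forall_mem_span_add_mem Λ
  have f_g_zero : f (g 0) = 1 := by simp [hfg]
  refine ⟨(Set.Icc (0 : ℝ) 1 ×ˢ C).image fun p => p.1 • g 0 + p.2,
    (isCompact_Icc.prod hC).image (by fun_prop), fun x => ?_⟩
  let y := (g ^ (-⌊f x⌋)) x
  have f_y : f y = Int.fract (f x) := by
    rw [apply_zpow_apply_eq_add hfg, Int.cast_neg, ← sub_eq_add_neg, Int.self_sub_floor]
  obtain ⟨l, hl, hlC⟩ := exists_add_mem (y - f y • g 0) (hf (by simp [f_g_zero]))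
  refine ⟨_, constVAdd_mul_zpow_mem_suspensionGroup g hl (-⌊f x⌋), (f y, _), ⟨?_, hlC⟩, ?_⟩
  · rw [f_y]
    exact ⟨Int.fract_nonneg _, (Int.fract_lt_one _).le⟩
  · change f y • g 0 + (l + (y - f y • g 0)) = l + y
    abel

end Lattice

section IntegerMatrix

variable {V ι : Type*} [AddCommGroup V] [Fintype ι] [DecidableEq ι]

theorem map_closure_range_eq_of_isUnit_det {φ : V →+ V} {v : ι → V} {A : Matrix ι ι ℤ}
    (hA : IsUnit A.det) (hφ : ∀ j, φ (v j) = ∑ i, A i j • v i) :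
    (AddSubgroup.closure (Set.range v)).map φ = AddSubgroup.closure (Set.range v) := by
  have v_mem (i : ι) : v i ∈ AddSubgroup.closure (Set.range v) :=
    AddSubgroup.subset_closure (Set.mem_range_self i)
  apply le_antisymm
  · rw [AddMonoidHom.map_closure, AddSubgroup.closure_le]
    rintro - ⟨-, ⟨j, rfl⟩, rfl⟩
    rw [hφ]
    exact sum_mem fun i _ => zsmul_mem (v_mem i) _
  · rw [AddSubgroup.closure_le]
    rintro - ⟨j, rfl⟩
    refine ⟨∑ i, A⁻¹ i j • v i, sum_mem fun i _ => zsmul_mem (v_mem i) _, ?_⟩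
    calc φ (∑ i, A⁻¹ i j • v i) = ∑ i, A⁻¹ i j • ∑ k, A k i • v k := by
          simp only [map_sum, map_zsmul, hφ]
      _ = ∑ k, (A * A⁻¹) k j • v k := by
          simp only [Finset.smul_sum, smul_smul, Matrix.mul_apply, Finset.sum_smul]
          rw [Finset.sum_comm]
          simp only [mul_comm]
      _ = v j := by simp [Matrix.mul_nonsing_inv A hA, Matrix.one_apply]

theorem mulVec_eq_sum_zsmul_of_mul_eq {R m n : Type*} [CommRing R] [Fintype m] [Fintype n]
    {L : Matrix m m R} {v : n → m → R} {A : Matrix n n ℤ}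
    (h : L * Matrix.of (fun i j => v j i) =
      Matrix.of (fun i j => v j i) * A.map (Int.cast : ℤ → R)) (j : n) :
    L *ᵥ v j = ∑ i, A i j • v i := by
  ext i
  simpa [Matrix.mul_apply, Matrix.mulVec, dotProduct, mul_comm] using congrFun₂ h i j

end IntegerMatrix

theorem span_addSubgroup_closure (R : Type*) {M : Type*} [Ring R] [AddCommGroup M] [Module R M]
    (s : Set M) : Submodule.span R (AddSubgroup.closure s : Set M) = Submodule.span R s := by
  rw [← Submodule.span_int_eq_addSubgroupClosure, Submodule.coe_toAddSubgroup,
    Submodule.span_span_of_tower]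

theorem ker_coord_eq_span {ι R M : Type*} [Ring R] [AddCommGroup M] [Module R M]
    (b : Module.Basis ι R M) (i : ι) :
    (b.coord i).ker = Submodule.span R (b '' {i}ᶜ) := by
  ext x
  simp [b.mem_span_image, Set.subset_compl_singleton_iff]

theorem exists_apply_eq_one_ker_eq_span_range {K V : Type*} [Field K] [AddCommGroup V]
    [Module K V] {n : ℕ} {u : V} {v : Fin n → V} (huv : LinearIndependent K (vecCons u v))
    (hn : Module.finrank K V = n + 1) :
    ∃ f : V →ₗ[K] K, f u = 1 ∧ f.ker = Submodule.span K (Set.range v) := by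
  let b := basisOfLinearIndependentOfCardEqFinrank huv (by simp [hn])
  have hb : ⇑b = vecCons u v := coe_basisOfLinearIndependentOfCardEqFinrank huv _
  refine ⟨b.coord 0, ?_, ?_⟩
  · have b_zero : b 0 = u := by rw [hb, cons_val_zero]
    simp [← b_zero]
  · rw [ker_coord_eq_span, ← Fin.range_succ, ← Set.range_comp, hb]
    rfl

section EuclideanThreeSpace

theorem HasForm.apply_zero {γ : AffT} {A : Matrix (Fin 3) (Fin 3) ℝ} {v : E3}
    (h : HasForm γ A v) : γ 0 = v := by
  simp [h 0]

theorem HasForm.linear_apply {γ : AffT} {A : Matrix (Fin 3) (Fin 3) ℝ} {v : E3}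
    (h : HasForm γ A v) (x : E3) : γ.linear x = A *ᵥ x := by
  have : γ x = γ.linear x + γ 0 := by simpa using γ.map_vadd 0 x
  rwa [h x, h.apply_zero, add_left_inj, eq_comm] at this

theorem IsTranslationBy.eq_constVAdd {γ : AffT} {v : E3} (h : IsTranslationBy γ v) :
    γ = AffineEquiv.constVAdd ℝ E3 v := by
  ext1 x
  exact (h x).trans (add_comm x v)

theorem hasCompactQuotient_of_isCompact {Γ : Subgroup AffT} {K : Set E3} (hK : IsCompact K)
    (hΓ : ∀ x, ∃ γ ∈ Γ, γ x ∈ K) : HasCompactQuotient Γ := by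
  let _ := orbitSetoid Γ
  have image_eq : Quotient.mk (orbitSetoid Γ) '' K = Set.univ := by
    refine Set.eq_univ_of_forall fun z => z.inductionOn fun x => ?_
    obtain ⟨γ, hγ, hx⟩ := hΓ x
    exact ⟨γ x, hx, Quotient.sound (Setoid.symm ⟨γ, hγ, rfl⟩)⟩
  exact ⟨image_eq ▸ hK.image continuous_quotient_mk'⟩

end EuclideanThreeSpace

theorem stmt_16_general (L : Matrix (Fin 3) (Fin 3) ℝ) (v₁ v₂ v₃ : E3)
    (hindep : LinearIndependent ℝ ![v₁, v₂, v₃])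
    (hL : L *ᵥ v₁ - v₁ ∈ Submodule.span ℝ {v₂, v₃})
    (A : Matrix (Fin 2) (Fin 2) ℤ) (hA : IsUnit A.det)
    (hLA : L * Matrix.of (fun i j => ![v₂, v₃] j i) =
      Matrix.of (fun i j => ![v₂, v₃] j i) * A.map (Int.cast : ℤ → ℝ))
    (g t₁ t₂ : AffT) (hg : HasForm g L v₁)
    (ht₁ : IsTranslationBy t₁ v₂) (ht₂ : IsTranslationBy t₂ v₃)
    (Γ : Subgroup AffT) (hΓ : Γ = Subgroup.closure {g, t₁, t₂}) :
    IsFreeAction Γ ∧ IsProperlyDiscontinuous Γ ∧ HasCompactQuotient Γ := by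
  let Λ := AddSubgroup.closure (Set.range ![v₂, v₃])
  have range_v : Set.range ![v₂, v₃] = {v₂, v₃} := by simp [Set.pair_comm]
  obtain rfl : Γ = suspensionGroup g Λ := by
    rw [hΓ, ← closure_insert_constVAdd, range_v, Set.image_pair, ht₁.eq_constVAdd,
      ht₂.eq_constVAdd]
  have hgΛ : Λ.map (g.linear : E3 →+ E3) = Λ := map_closure_range_eq_of_isUnit_det hA fun j =>
    (hg.linear_apply _).trans (mulVec_eq_sum_zsmul_of_mul_eq hLA j)
  have : DiscreteTopology Λ := discreteTopology_closure_of_linearIndepOn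
    (hindep.comp Fin.succ (Fin.succ_injective 2)).linearIndepOn_id
  obtain ⟨f, f_v₁, ker_f⟩ := exists_apply_eq_one_ker_eq_span_range hindep (by simp)
  have hf : f.ker = Submodule.span ℝ (Λ : Set E3) :=
    ker_f.trans (span_addSubgroup_closure ℝ _).symm
  have f_L_v₁ : f (L *ᵥ v₁) = 1 := by
    rwa [← range_v, ← ker_f, LinearMap.mem_ker, map_sub, sub_eq_zero, f_v₁] at hL
  have hfg : ∀ x, f (g x) = f x + 1 := apply_apply_eq_add_one hgΛ hf
    (by rw [hg.apply_zero, f_v₁]) (by rw [hg.linear_apply, hg.apply_zero, f_L_v₁])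
  have hΛ : ∀ l ∈ Λ, f l = 0 := fun l hl => hf.ge (Submodule.subset_span hl)
  obtain ⟨K, hK, exists_mem_K⟩ := exists_isCompact_forall_exists_mem_suspensionGroup hf.le hfg
  exact ⟨fun γ hγ ⟨x, hx⟩ => eq_one_of_mem_suspensionGroup_of_apply_eq hgΛ hΛ hfg hγ hx,
    fun _ _ hK hL => finite_setOf_mem_suspensionGroup_image_inter_nonempty hgΛ hΛ hfg hK hL,
    hasCompactQuotient_of_isCompact hK exists_mem_K⟩

/-- hyperbolic suspensions with integral linear part give free, properly
discontinuous actions with compact quotient. -/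
theorem stmt_16 (p q a b c d : ℤ) (hdet : a * d - b * c = 1) (htr : a + d > 2)
    (x₁ : ℝ) (v₂ v₃ : E3)
    (hindep : LinearIndependent ℝ ![![x₁, 0, 0], v₂, v₃])
    (hA : ∃ A : Matrix (Fin 2) (Fin 2) ℤ, A.det = 1 ∧
      (!![1, (p : ℝ), (q : ℝ); 0, (a : ℝ), (b : ℝ); 0, (c : ℝ), (d : ℝ)]) *
          (Matrix.of fun i j => ![v₂, v₃] j i) =
        (Matrix.of fun i j => ![v₂, v₃] j i) * A.map (Int.cast : ℤ → ℝ))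
    (g t₁ t₂ : AffT)
    (hg : HasForm g !![1, (p : ℝ), (q : ℝ); 0, (a : ℝ), (b : ℝ); 0, (c : ℝ), (d : ℝ)]
      ![x₁, 0, 0])
    (ht₁ : IsTranslationBy t₁ v₂) (ht₂ : IsTranslationBy t₂ v₃)
    (Γ : Subgroup AffT) (hΓ : Γ = Subgroup.closure {g, t₁, t₂}) :
    IsFreeAction Γ ∧ IsProperlyDiscontinuous Γ ∧ HasCompactQuotient Γ := by
  obtain ⟨A, hAdet, hLA⟩ := hA
  have hL : !![1, (p : ℝ), (q : ℝ); 0, (a : ℝ), (b : ℝ); 0, (c : ℝ), (d : ℝ)] *ᵥ ![x₁, 0, 0] =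
      ![x₁, 0, 0] := by
    ext i
    fin_cases i <;> simp [Matrix.mulVec, dotProduct, Fin.sum_univ_three]
  exact stmt_16_general _ _ v₂ v₃ hindep (by simp [hL]) A (hAdet ▸ isUnit_one) hLA
    g t₁ t₂ hg ht₁ ht₂ Γ hΓ
end
end

section
/- Fix λ ∈ ℝ with λ ≠ 0, and let I_λ be the group of affine transformations of ℝ³ consisting of the maps g_{s,t,u} with linear part [[1, λ·e^s·u, λ·e^{−s}·t],[0, e^s, 0],[0, 0, e^{−s}]] and vector part (s + λ·u·t, t, u), for (s,t,u) ∈ ℝ³. Let Γ be a group of affine transformations of ℝ³ whose linear parts all lie in GL₃(ℤ), and suppose there is an invertible affine transformation φ of ℝ³ such that φΓφ⁻¹ is a subgroup of I_λ whose parameter set {(s,t,u) ∈ ℝ³ : g_{s,t,u} ∈ φΓφ⁻¹} is a discrete subset of ℝ³, and suppose the orbit space ℝ³/Γ is compact. Then there exist P ∈ GL₃(ℤ) and w ∈ ℝ³ such that, after conjugating Γ by the affine map x ↦ P x + w, the group Γ is generated by three elements g = ([[1,p,q],[0,a,b],[0,c,d]], (x₁,y₁,z₁)), h₁ = ([[1,a₁,0],[0,1,0],[0,0,1]],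 (x₂,y₂,z₂)), h₂ = ([[1,0,n·a₁],[0,1,0],[0,0,1]], (x₃,y₃,z₃)), where p,q,a,b,c,d ∈ ℤ, a₁ and n are positive integers, and diag(a₁, n·a₁)·[[a,b],[c,d]] = A·diag(a₁, n·a₁) for some A ∈ SL₂(ℤ). -/
open Matrix

noncomputable section

/-- The affine transformation `g_{s,t,u}` of the family `I_λ`. -/
def Ifam (lam s t u : ℝ) : E3 → E3 := fun x =>
  (!![1, lam * Real.exp s * u, lam * Real.exp (-s) * t;
      0, Real.exp s, 0;
      0, 0, Real.exp (-s)]).mulVec x + ![s + lam * u * t, t, u]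

/-!
The maps `g_{s,t,u}` form a simply transitive action of the solvable group `Sol = ℝ² ⋊ ℝ`, so `Γ`
corresponds to a discrete cocompact subgroup `Δ` of `Sol`. The linear part of `g_{s,t,u}` has trace
`1 + 2 cosh s`; since this is an integer on `Δ`, the values of `s` on `Δ` form a cyclic group, and
`Δ` therefore meets the plane `s = 0` in a lattice of rank two. The elements of that lattice have
linear part `1 + η ⊗ r`, where `η` is fixed by every linear part and `r` runs through a rank-two
group of linear forms killing `η`, integral up to a common scalar. A Smith basis of this group
extends to a basis of `(ℤ³)*`, which makes both generators elementary and at the same time puts `η`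
on the first axis. Normality of the lattice in `Δ` yields the remaining congruence on the block
`[[a, b], [c, d]]`.
-/

section Topology

open Pointwise

theorem exists_isCompact_image_eq_univ {X Y : Type*} [TopologicalSpace X] [TopologicalSpace Y]
    [WeaklyLocallyCompactSpace X] [CompactSpace Y] {f : X → Y} (hf : IsOpenMap f)
    (hsurj : Function.Surjective f) : ∃ K : Set X, IsCompact K ∧ f '' K = Set.univ := by
  choose N hN_compact hN_nhds using fun x : X ↦ exists_compact_mem_nhds x
  obtain ⟨F, hF⟩ := isCompact_univ.elim_finite_subcover (fun x ↦ f '' interior (N x))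
    (fun x ↦ hf _ isOpen_interior) fun y _ ↦ by
      obtain ⟨x, rfl⟩ := hsurj y
      exact Set.mem_iUnion_of_mem x ⟨x, mem_interior_iff_mem_nhds.mpr (hN_nhds x), rfl⟩
  refine ⟨⋃ x ∈ F, N x, F.isCompact_biUnion fun x _ ↦ hN_compact x, Set.univ_subset_iff.mp ?_⟩
  rw [Set.image_iUnion₂]
  exact hF.trans (Set.iUnion₂_mono fun x _ ↦ Set.image_mono interior_subset)

theorem exists_isCompact_ker_subset_mul {G A : Type*} [Group G] [TopologicalSpace G]
    [ContinuousConstSMul G G] [Group A] [TopologicalSpace A] [IsTopologicalGroup A] [T2Space A]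
    {f : G →* A} (hf : Continuous f) {Δ : Subgroup G} [DiscreteTopology (Δ.map f)] {K : Set G}
    (hK : IsCompact K) (hΔK : (Δ : Set G) * K = Set.univ) :
    ∃ K' : Set G, IsCompact K' ∧ (f.ker : Set G) ⊆ ((Δ ⊓ f.ker : Subgroup G) : Set G) * K' := by
  have hfin : ((f '' K)⁻¹ ∩ Δ.map f).Finite :=
    ((hK.image hf).inv.inter_right Subgroup.isClosed_of_discrete).finite
      (DiscreteTopology.isDiscrete.mono Set.inter_subset_right)
  -- If `δ * k ∈ ker f` with `k ∈ K`, then `f δ` lies in a finite set, hence `δ` lies in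
  -- `(Δ ⊓ ker f) * c (f δ)` for one of finitely many representatives `c (f δ)`.
  choose! c hcΔ hfc using fun a (ha : a ∈ Δ.map f) ↦ Subgroup.mem_map.mp ha
  refine ⟨⋃ a ∈ (f '' K)⁻¹ ∩ Δ.map f, c a • K, hfin.isCompact_biUnion fun a _ ↦ hK.smul (c a),
    fun p (hp : f p = 1) ↦ ?_⟩
  obtain ⟨δ, hδ, k, hk, rfl⟩ : p ∈ (Δ : Set G) * K := hΔK ▸ Set.mem_univ p
  have hfδ : f δ ∈ Δ.map f := Subgroup.mem_map_of_mem f hδ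
  have hfδk : f δ = (f k)⁻¹ := eq_inv_of_mul_eq_one_left (by rw [← map_mul, hp])
  refine ⟨δ * (c (f δ))⁻¹, Subgroup.mem_inf.mpr ⟨mul_mem hδ (inv_mem (hcΔ _ hfδ)), ?_⟩,
    c (f δ) * k, Set.mem_biUnion ⟨?_, hfδ⟩ (Set.smul_mem_smul_set hk), ?_⟩
  · rw [MonoidHom.mem_ker, map_mul, map_inv, hfc _ hfδ, mul_inv_cancel]
  · exact ⟨k, hk, by rw [hfδk, inv_inv]⟩
  · simp only [mul_assoc, inv_mul_cancel_left]

theorem eq_top_of_isBounded_of_add_eq_univ {E : Type*} [NormedAddCommGroup E]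
    [NormedSpace ℝ E] [FiniteDimensional ℝ E] {S : Submodule ℝ E} {K : Set E}
    (hK : Bornology.IsBounded K) (hSK : (S : Set E) + K = Set.univ) : S = ⊤ := by
  by_contra hS
  obtain ⟨f, hf, hSf⟩ := Submodule.exists_le_ker_of_lt_top S (lt_top_iff_ne_top.mpr hS)
  have hsurj : Function.Surjective f := LinearMap.surjective hf
  have hbdd : Bornology.IsBounded (f '' K) :=
    (LinearMap.toContinuousLinearMap f).lipschitz.isBounded_image hK
  have himage : f '' K = Set.univ := Set.eq_univ_of_forall fun y ↦ by
    obtain ⟨x, rfl⟩ := hsurj y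
    obtain ⟨v, hv, k, hk, rfl⟩ : x ∈ (S : Set E) + K := hSK ▸ Set.mem_univ x
    exact ⟨k, hk, by rw [map_add, LinearMap.mem_ker.mp (hSf hv), zero_add]⟩
  exact NormedSpace.unbounded_univ ℝ ℝ (himage ▸ hbdd)

end Topology

section Smith

open Module Submodule

variable {ι R M : Type*} [CommRing R] [AddCommGroup M] [Module R M]

theorem span_pair_smul_smul_eq {a b X Y : R} (h : X * a + Y * b = 1) (d : R) (x y : M) :
    span R {(d * a) • x, (d * b) • y} =
      span R {d • (a • x + b • y), (a * b * d) • (X • y - Y • x)} := by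
  apply le_antisymm <;> rw [span_le, Set.pair_subset_iff] <;>
    simp only [SetLike.mem_coe, mem_span_pair]
  · refine ⟨⟨X * a, -1, ?_⟩, ⟨Y * b, 1, ?_⟩⟩
    · linear_combination (norm := module) (d * a * h) • x
    · linear_combination (norm := module) (d * b * h) • y
  · exact ⟨⟨1, 1, by module⟩, ⟨-(b * Y), a * X, by module⟩⟩

theorem exists_basis_apply_eq_apply_eq [Finite ι] [Nontrivial R] (b : Basis ι R M) {i j : ι}
    (hij : i ≠ j) {p q r s : R} (h : p * s - q * r = 1) :
    ∃ b' : Basis ι R M, b' i = p • b i + q • b j ∧ b' j = r • b i + s • b j := by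
  classical
  have := Fintype.ofFinite ι
  let v : ι → M := Function.update (Function.update b i (p • b i + q • b j)) j (r • b i + s • b j)
  have hvi : v i = p • b i + q • b j := by simp [v, hij]
  have hvj : v j = r • b i + s • b j := by simp [v]
  have hv_mem (k : ι) : v k ∈ span R (Set.range v) := subset_span ⟨k, rfl⟩
  have hspan : ⊤ ≤ span R (Set.range v) := by
    rw [← b.span_eq, span_le, Set.range_subset_iff]
    intro k
    rcases eq_or_ne k i with rfl | hki
    · have hbk : b k = s • v k - q • v j := by
        rw [hvi, hvj]; linear_combination (norm := module) (-h) • b k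
      exact hbk ▸ sub_mem (smul_mem _ _ (hv_mem k)) (smul_mem _ _ (hv_mem j))
    rcases eq_or_ne k j with rfl | hkj
    · have hbk : b k = p • v k - r • v i := by
        rw [hvi, hvj]; linear_combination (norm := module) (-h) • b k
      exact hbk ▸ sub_mem (smul_mem _ _ (hv_mem k)) (smul_mem _ _ (hv_mem i))
    · have hbk : v k = b k := by simp [v, hki, hkj]
      exact hbk ▸ hv_mem k
  have hindep := linearIndependent_of_top_le_span_of_card_eq_finrank hspan
    (finrank_eq_card_basis b).symm
  exact ⟨Basis.mk hindep hspan, by simp [hvi], by simp [hvj]⟩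

theorem span_pair_basis_eq {N : Submodule R M} (b : Basis (Fin 2) R N) :
    span R {(b 0 : M), (b 1 : M)} = N := by
  have hrange : ({(b 0 : M), (b 1 : M)} : Set M) = N.subtype '' Set.range b := by
    ext x
    simp [Fin.exists_fin_two, eq_comm]
  rw [hrange, span_image, b.span_eq, map_subtype_top]

theorem exists_basis_eq_span_pair [Finite ι] [IsDomain R] [IsPrincipalIdealRing R]
    (b : Basis ι R M) {i j : ι} (hij : i ≠ j) {N : Submodule R M} (hN : finrank R N = 2) :
    ∃ b' : Basis ι R M, ∃ a n : R, a ≠ 0 ∧ n ≠ 0 ∧ N = span R {a • b' i, (n * a) • b' j} := by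
  classical
  let := IsBezout.toGCDDomain R
  obtain ⟨m, snf⟩ := N.smithNormalForm b
  obtain rfl : m = 2 := by rw [← hN, finrank_eq_card_basis snf.bN, Fintype.card_fin]
  obtain ⟨σ, hσi, hσj⟩ := MulAction.is_two_pretransitive_iff.mp
    (Equiv.Perm.isMultiplyPretransitive ι 2) hij
    (snf.f.injective.ne (zero_ne_one' (Fin 2)))
  obtain ⟨p, q, hp, hq, hpq⟩ := extract_gcd (snf.a 0) (snf.a 1)
  obtain ⟨X, Y, hXY⟩ := (gcd_isUnit_iff p q).mp hpq
  have ha (k : Fin 2) : snf.a k ≠ 0 := fun h ↦ snf.bN.ne_zero k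
    (Subtype.ext (by rw [snf.snf, h, zero_smul, ZeroMemClass.coe_zero]))
  obtain ⟨b', hb'i, hb'j⟩ := exists_basis_apply_eq_apply_eq (snf.bM.reindex σ.symm) hij
    (show p * X - q * -Y = 1 by linear_combination hXY)
  simp only [Basis.reindex_apply, Equiv.symm_symm] at hb'i hb'j
  refine ⟨b', gcd (snf.a 0) (snf.a 1), p * q, ?_, mul_ne_zero ?_ ?_, ?_⟩
  · exact left_ne_zero_of_mul (hp ▸ ha 0)
  · exact right_ne_zero_of_mul (hp ▸ ha 0)
  · exact right_ne_zero_of_mul (hq ▸ ha 1)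
  calc N = span R {(snf.bN 0 : M), (snf.bN 1 : M)} :=
        (span_pair_basis_eq snf.bN).symm
    _ = span R {(gcd (snf.a 0) (snf.a 1) * p) • snf.bM (σ i),
          (gcd (snf.a 0) (snf.a 1) * q) • snf.bM (σ j)} := by
        rw [snf.snf, snf.snf, ← hp, ← hq, ← hσi, ← hσj]; rfl
    _ = _ := by rw [span_pair_smul_smul_eq hXY, hb'i, hb'j, neg_smul, neg_add_eq_sub]

end Smith

/-- The solvable Lie group `ℝ² ⋊ ℝ`, where `s` acts on the plane by `diag(e^s, e^{-s})`. The
coordinates `(s, t, u)` are chosen so that `(s, t, u) ↦ g_{s,t,u}` is a homomorphism for every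
`λ`. -/
@[ext]
structure Sol where
  s : ℝ
  t : ℝ
  u : ℝ

namespace Sol

instance : Mul Sol where
  mul p q := ⟨p.s + q.s, p.t + Real.exp p.s * q.t, p.u + Real.exp (-p.s) * q.u⟩

instance : One Sol where
  one := ⟨0, 0, 0⟩

instance : Inv Sol where
  inv p := ⟨-p.s, -(Real.exp (-p.s) * p.t), -(Real.exp p.s * p.u)⟩

@[simp] theorem one_s : (1 : Sol).s = 0 := rfl
@[simp] theorem one_t : (1 : Sol).t = 0 := rfl
@[simp] theorem one_u : (1 : Sol).u = 0 := rfl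

variable (p q : Sol)

@[simp] theorem mul_s : (p * q).s = p.s + q.s := rfl
@[simp] theorem mul_t : (p * q).t = p.t + Real.exp p.s * q.t := rfl
@[simp] theorem mul_u : (p * q).u = p.u + Real.exp (-p.s) * q.u := rfl
@[simp] theorem inv_s : p⁻¹.s = -p.s := rfl
@[simp] theorem inv_t : p⁻¹.t = -(Real.exp (-p.s) * p.t) := rfl
@[simp] theorem inv_u : p⁻¹.u = -(Real.exp p.s * p.u) := rfl

instance : Group Sol :=
  Group.ofLeftAxioms
    (fun p q r ↦ by
      ext <;> simp only [mul_s, mul_t, mul_u, neg_add, Real.exp_add] <;> ring)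
    (fun p ↦ by ext <;> simp)
    (fun p ↦ by ext <;> simp)

/-- The coordinates `(s, t, u)` of an element of `Sol`. -/
def equivProd : Sol ≃ ℝ × ℝ × ℝ where
  toFun p := (p.s, p.t, p.u)
  invFun x := ⟨x.1, x.2.1, x.2.2⟩

instance : TopologicalSpace Sol := .induced equivProd inferInstance

theorem isInducing_equivProd : Topology.IsInducing equivProd := ⟨rfl⟩

theorem continuous_s : Continuous s := continuous_fst.comp isInducing_equivProd.continuous

theorem continuous_t : Continuous t :=
  (continuous_fst.comp continuous_snd).comp isInducing_equivProd.continuous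

theorem continuous_u : Continuous u :=
  (continuous_snd.comp continuous_snd).comp isInducing_equivProd.continuous

instance : ContinuousConstSMul Sol Sol where
  continuous_const_smul _ := isInducing_equivProd.continuous_iff.mpr <|
    (continuous_const.add continuous_s).prodMk <|
      (continuous_const.add (continuous_const.mul continuous_t)).prodMk
        (continuous_const.add (continuous_const.mul continuous_u))

/-- The coordinate `s`, as the projection of `Sol = ℝ² ⋊ ℝ` onto its quotient `ℝ`. -/
def sHom : Sol →* Multiplicative ℝ where
  toFun p := .ofAdd p.s
  map_one' := rfl
  map_mul' _ _ := rfl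

theorem continuous_sHom : Continuous sHom := continuous_ofAdd.comp continuous_s

/-- The normal subgroup `s = 0` of `Sol`, parametrized by the plane of the coordinates `(t, u)`. -/
def ofPlane : Multiplicative (ℝ × ℝ) →* Sol where
  toFun τ := ⟨0, τ.toAdd.1, τ.toAdd.2⟩
  map_one' := rfl
  map_mul' _ _ := by ext <;> simp

theorem range_ofPlane : ofPlane.range = sHom.ker := by
  ext p
  constructor
  · rintro ⟨τ, rfl⟩
    rfl
  · intro hp
    exact ⟨.ofAdd (p.t, p.u), Sol.ext (congrArg Multiplicative.toAdd hp).symm rfl rfl⟩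

theorem ofPlane_injective : Function.Injective ofPlane := fun _ _ h ↦
  Multiplicative.toAdd.injective (Prod.ext (congrArg t h) (congrArg u h))

end Sol

section AffineGroup

/-- The linear part of an affine transformation of `ℝ³`, as an invertible matrix. -/
def linearPart : AffT →* GL (Fin 3) ℝ :=
  Matrix.GeneralLinearGroup.toLin.symm.toMonoidHom.comp <|
    (LinearMap.GeneralLinearGroup.generalLinearEquiv ℝ E3).symm.toMonoidHom.comp
      AffineEquiv.linearHom

theorem linearPart_mulVec (γ : AffT) (x : E3) :
    (linearPart γ : Matrix (Fin 3) (Fin 3) ℝ) *ᵥ x = γ.linear x :=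
  LinearMap.toMatrix'_mulVec (γ.linear : E3 →ₗ[ℝ] E3) x

theorem hasForm_iff {γ : AffT} {A : Matrix (Fin 3) (Fin 3) ℝ} {v : E3} :
    HasForm γ A v ↔ (linearPart γ : Matrix (Fin 3) (Fin 3) ℝ) = A ∧ γ 0 = v := by
  have hγ (x : E3) : γ x = (linearPart γ : Matrix (Fin 3) (Fin 3) ℝ) *ᵥ x + γ 0 := by
    rw [linearPart_mulVec]
    simpa using γ.map_vadd 0 x
  constructor
  · intro h
    have h0 : γ 0 = v := by simpa using h 0
    refine ⟨ext_of_mulVec_single fun i ↦ ?_, h0⟩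
    simpa [hγ (Pi.single i 1), h0] using h (Pi.single i 1)
  · rintro ⟨rfl, rfl⟩
    exact hγ

theorem exists_linearPart_eq (A : GL (Fin 3) ℝ) (w : E3) :
    ∃ ψ : AffT, linearPart ψ = A ∧ ψ 0 = w := by
  let L := LinearMap.GeneralLinearGroup.generalLinearEquiv ℝ E3 (Matrix.GeneralLinearGroup.toLin A)
  refine ⟨L.toAffineEquiv.trans (AffineEquiv.constVAdd ℝ E3 w), ?_, ?_⟩
  · exact Matrix.GeneralLinearGroup.toLin.symm_apply_apply A
  · simp

end AffineGroup

namespace Sol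

variable (lam : ℝ) (p q : Sol)

/-- The linear part of the element `g_{s,t,u}` of `I_λ`. -/
def linMatrix : Matrix (Fin 3) (Fin 3) ℝ :=
  !![1, lam * Real.exp p.s * p.u, lam * Real.exp (-p.s) * p.t;
     0, Real.exp p.s, 0;
     0, 0, Real.exp (-p.s)]

theorem ifam_mul (x : E3) : Ifam lam (p * q).s (p * q).t (p * q).u x =
    Ifam lam p.s p.t p.u (Ifam lam q.s q.t q.u x) := by
  funext i
  fin_cases i <;>
    simp [Ifam, dotProduct, Fin.sum_univ_three, Real.exp_add, Real.exp_neg] <;>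
    field_simp <;> ring

/-- The affine action of `Sol` on `ℝ³` by the transformations `g_{s,t,u}`; its image is `I_λ`. -/
def toAff : Sol →* AffT :=
  AffineEquiv.equivUnitsAffineMap.symm.toMonoidHom.comp <| MonoidHom.toHomUnits
    { toFun := fun p ↦ (linMatrix lam p).mulVecLin.toAffineMap +
        AffineMap.const ℝ E3 ![p.s + lam * p.u * p.t, p.t, p.u]
      map_one' := AffineMap.ext fun x ↦ funext fun i ↦ by
        fin_cases i <;> simp [linMatrix, vecHead, vecTail]
      map_mul' := fun p q ↦ AffineMap.ext (ifam_mul lam p q) }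

theorem toAff_apply (x : E3) : toAff lam p x = Ifam lam p.s p.t p.u x := rfl

theorem linearPart_toAff :
    (linearPart (toAff lam p) : Matrix (Fin 3) (Fin 3) ℝ) = linMatrix lam p :=
  (hasForm_iff.mp (toAff_apply lam p)).1

end Sol

namespace Sol

open Pointwise

variable {Δ : Subgroup Sol}

/-- The elements of `Δ` with `s = 0`, as a group of vectors `(t, u)` of the plane. -/
def planeLattice (Δ : Subgroup Sol) : Submodule ℤ (ℝ × ℝ) :=
  AddSubgroup.toIntSubmodule (Subgroup.toAddSubgroup' (Δ.comap ofPlane))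

theorem mem_planeLattice {x : ℝ × ℝ} : x ∈ planeLattice Δ ↔ ofPlane (.ofAdd x) ∈ Δ := Iff.rfl

instance [DiscreteTopology Δ] : DiscreteTopology (planeLattice Δ) :=
  DiscreteTopology.preimage_of_continuous_injective (Δ : Set Sol)
    (f := fun x ↦ ofPlane (.ofAdd x))
    (isInducing_equivProd.continuous_iff.mpr (continuous_const.prodMk continuous_id))
    (ofPlane_injective.comp Multiplicative.ofAdd.injective)

theorem span_planeLattice_eq_top [DiscreteTopology (Δ.map sHom)] {K : Set Sol} (hK : IsCompact K)
    (hΔK : (Δ : Set Sol) * K = Set.univ) :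
    Submodule.span ℝ (planeLattice Δ : Set (ℝ × ℝ)) = ⊤ := by
  obtain ⟨K', hK', hcover⟩ := exists_isCompact_ker_subset_mul continuous_sHom hK hΔK
  refine eq_top_of_isBounded_of_add_eq_univ
    (hK'.image (continuous_t.prodMk continuous_u)).isBounded
    (Set.eq_univ_of_forall fun x ↦ ?_)
  obtain ⟨δ, hδ, k, hk, hx⟩ :=
    hcover (range_ofPlane.le (MonoidHom.mem_range.mpr ⟨.ofAdd x, rfl⟩))
  obtain ⟨τ, rfl⟩ := range_ofPlane.ge hδ.2
  refine ⟨τ.toAdd, Submodule.subset_span (mem_planeLattice.mpr hδ.1), (k.t, k.u), ⟨k, hk, rfl⟩, ?_⟩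
  have ht := congrArg t hx
  have hu := congrArg u hx
  simpa [ofPlane, Prod.ext_iff] using And.intro ht hu

theorem finrank_planeLattice [DiscreteTopology Δ] [DiscreteTopology (Δ.map sHom)] {K : Set Sol}
    (hK : IsCompact K) (hΔK : (Δ : Set Sol) * K = Set.univ) :
    Module.finrank ℤ (planeLattice Δ) = 2 := by
  have : IsZLattice ℝ (planeLattice Δ) := ⟨span_planeLattice_eq_top hK hΔK⟩
  simpa using ZLattice.rank ℝ (planeLattice Δ)

theorem eq_closure_of_planeLattice_eq_span {g : Sol} {x y : ℝ × ℝ} (hg : g ∈ Δ)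
    (hs : Δ.map sHom ≤ Subgroup.zpowers (sHom g))
    (hxy : planeLattice Δ = Submodule.span ℤ {x, y}) :
    Δ = Subgroup.closure {g, ofPlane (.ofAdd x), ofPlane (.ofAdd y)} := by
  set Δ' := Subgroup.closure {g, ofPlane (.ofAdd x), ofPlane (.ofAdd y)}
  have hplane : planeLattice Δ ≤ planeLattice Δ' := by
    rw [hxy, Submodule.span_le, Set.pair_subset_iff]
    constructor <;> refine mem_planeLattice.mpr (Subgroup.subset_closure ?_) <;> simp
  refine le_antisymm (fun p hp ↦ ?_) ((Subgroup.closure_le _).mpr ?_)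
  · obtain ⟨m, hm : sHom g ^ m = sHom p⟩ := hs (Subgroup.mem_map_of_mem sHom hp)
    have hker : p * (g ^ m)⁻¹ ∈ sHom.ker := by
      rw [MonoidHom.mem_ker, map_mul, map_inv, map_zpow, hm, mul_inv_cancel]
    obtain ⟨τ, hτ⟩ := range_ofPlane.ge hker
    have hgm : g ^ m ∈ Δ' := zpow_mem (Subgroup.subset_closure (Set.mem_insert _ _)) m
    have hτΔ : τ.toAdd ∈ planeLattice Δ :=
      mem_planeLattice.mpr (hτ ▸ mul_mem hp (inv_mem (zpow_mem hg m)))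
    rw [← inv_mul_cancel_right p (g ^ m), ← hτ]
    exact mul_mem (hplane hτΔ) hgm
  · have hmem (z : ℝ × ℝ) (hz : z ∈ ({x, y} : Set (ℝ × ℝ))) : ofPlane (.ofAdd z) ∈ Δ :=
      mem_planeLattice.mp (hxy ▸ Submodule.subset_span hz)
    exact Set.insert_subset hg (Set.pair_subset (hmem x (by simp)) (hmem y (by simp)))

theorem exists_map_sHom_eq_zpowers (h : ∀ p ∈ Δ, ∃ m : ℤ, (m : ℝ) = 1 + 2 * Real.cosh p.s) :
    ∃ g ∈ Δ, Δ.map sHom = Subgroup.zpowers (sHom g) := by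
  -- An integer `1 + 2 cosh s > 3` is at least `4`, and `cosh (log 2) = 5 / 4 < 3 / 2`.
  have hisol : ∀ p ∈ Δ, 0 < p.s → Real.log 2 ≤ p.s := by
    intro p hp hpos
    obtain ⟨m, hm⟩ := h p hp
    have hm3 : (3 : ℝ) < m := by linarith [Real.one_lt_cosh.mpr hpos.ne']
    have hm4 : (4 : ℝ) ≤ m := by exact_mod_cast hm3
    have hcosh : Real.cosh (Real.log 2) < Real.cosh p.s := by
      rw [Real.cosh_log two_pos]
      linarith
    rw [Real.cosh_lt_cosh, abs_of_pos hpos] at hcosh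
    exact (le_abs_self _).trans hcosh.le
  obtain ⟨a, ha⟩ := Subgroup.cyclic_of_isolated_one (H := Δ.map sHom)
    (a := .ofAdd (Real.log 2)) (Real.log_pos one_lt_two) (by
      rw [Set.disjoint_left]
      rintro _ ⟨p, hp, rfl⟩ ⟨hpos, hlt⟩
      exact (hisol p hp hpos).not_gt hlt)
  rw [← Subgroup.zpowers_eq_closure] at ha
  obtain ⟨g, hg, rfl⟩ := ha.ge (Subgroup.mem_zpowers a)
  exact ⟨g, hg, ha⟩

theorem discreteTopology_zpowers (a : Multiplicative ℝ) :
    DiscreteTopology (Subgroup.zpowers a) :=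
  inferInstanceAs (DiscreteTopology (AddSubgroup.zmultiples a.toAdd))

end Sol

section OrbitSpace

variable {Γ : Subgroup AffT}

theorem isOpenMap_quotientMk_orbitSetoid : IsOpenMap (Quotient.mk (orbitSetoid Γ)) := by
  intro U hU
  have himage : Quotient.mk (orbitSetoid Γ) ⁻¹' (Quotient.mk (orbitSetoid Γ) '' U) =
      ⋃ γ ∈ Γ, γ '' U := by
    ext y
    simp only [Set.mem_preimage, Set.mem_image, Set.mem_iUnion]
    constructor
    · rintro ⟨x, hx, hxy⟩
      obtain ⟨γ, hγ, h⟩ := Quotient.exact hxy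
      exact ⟨γ, hγ, x, hx, h⟩
    · rintro ⟨γ, hγ, x, hx, h⟩
      exact ⟨x, hx, Quotient.sound ⟨γ, hγ, h⟩⟩
  refine isQuotientMap_quot_mk.isOpen_preimage.mp (himage ▸ ?_)
  exact isOpen_biUnion fun γ _ ↦ γ.toContinuousAffineEquiv.toHomeomorph.isOpenMap U hU

theorem HasCompactQuotient.exists_isCompact (h : HasCompactQuotient Γ) :
    ∃ K : Set E3, IsCompact K ∧ ∀ x, ∃ γ ∈ Γ, ∃ k ∈ K, γ k = x := by
  have : CompactSpace (Quotient (orbitSetoid Γ)) := h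
  obtain ⟨K, hK, hKuniv⟩ :=
    exists_isCompact_image_eq_univ (isOpenMap_quotientMk_orbitSetoid (Γ := Γ))
      Quotient.mk_surjective
  refine ⟨K, hK, fun x ↦ ?_⟩
  obtain ⟨k, hk, hkx⟩ : Quotient.mk _ x ∈ Quotient.mk (orbitSetoid Γ) '' K :=
    hKuniv ▸ Set.mem_univ _
  obtain ⟨γ, hγ, h⟩ := Quotient.exact hkx
  exact ⟨γ, hγ, k, hk, h⟩

end OrbitSpace

namespace Sol

open Pointwise

variable {lam : ℝ}

/-- The inverse of the orbit map `p ↦ p • 0` of the simply transitive action `Sol.toAff`. -/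
def ofPoint (lam : ℝ) (x : E3) : Sol := ⟨x 0 - lam * x 1 * x 2, x 1, x 2⟩

theorem continuous_ofPoint : Continuous (ofPoint lam) :=
  isInducing_equivProd.continuous_iff.mpr (by
    change Continuous fun x : E3 ↦ (x 0 - lam * x 1 * x 2, x 1, x 2)
    fun_prop)

theorem ofPoint_toAff_zero (p : Sol) : ofPoint lam (toAff lam p 0) = p := by
  ext <;> simp [toAff_apply, Ifam, ofPoint, mul_right_comm]

theorem toAff_ofPoint_zero (x : E3) : toAff lam (ofPoint lam x) 0 = x := by
  funext i
  fin_cases i <;> simp [toAff_apply, Ifam, ofPoint, mul_right_comm]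

theorem exists_isCompact_mul_eq_univ {Γ : Subgroup AffT} (hΓ : HasCompactQuotient Γ) {φ : AffT}
    {Δ : Subgroup Sol} (hΔ : Γ.map (MulAut.conj φ).toMonoidHom = Δ.map (toAff lam)) :
    ∃ K : Set Sol, IsCompact K ∧ (Δ : Set Sol) * K = Set.univ := by
  obtain ⟨K, hK, hΓK⟩ := hΓ.exists_isCompact
  refine ⟨(fun x ↦ ofPoint lam (φ x)) '' K, hK.image
    (continuous_ofPoint.comp (AffineMap.continuous_of_finiteDimensional φ.toAffineMap)),
    Set.eq_univ_of_forall fun p ↦ ?_⟩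
  obtain ⟨γ, hγ, k, hk, hγk⟩ := hΓK (φ.symm (toAff lam p 0))
  obtain ⟨δ, hδ, hδγ⟩ := hΔ.le (Subgroup.mem_map_of_mem (MulAut.conj φ).toMonoidHom hγ)
  refine ⟨δ, hδ, ofPoint lam (φ k), ⟨k, hk, rfl⟩, ?_⟩
  have horbit : toAff lam (δ * ofPoint lam (φ k)) 0 = toAff lam p 0 := by
    calc toAff lam (δ * ofPoint lam (φ k)) 0 = toAff lam δ (φ k) := by
          rw [map_mul, AffineEquiv.mul_def, AffineEquiv.trans_apply, toAff_ofPoint_zero]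
      _ = φ (γ k) := by
          rw [hδγ]
          exact congrArg (fun x ↦ φ (γ x)) (φ.symm_apply_apply k)
      _ = toAff lam p 0 := by rw [hγk, φ.apply_symm_apply]
  simpa only [ofPoint_toAff_zero] using congrArg (ofPoint lam) horbit

end Sol

section IntegralUnipotents

open Module

/-- `GL₃(ℤ)` as a subgroup of `GL₃(ℝ)`. -/
def integralGL : Subgroup (GL (Fin 3) ℝ) :=
  (Matrix.GeneralLinearGroup.map (Int.castRingHom ℝ)).range

theorem exists_intCast_eq_of_mem_integralGL {A : GL (Fin 3) ℝ} (hA : A ∈ integralGL)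
    (i j : Fin 3) :
    ∃ m : ℤ, A.1 i j = m := by
  obtain ⟨B, rfl⟩ := hA
  exact ⟨B i j, rfl⟩

theorem exists_GL_rows_eq_span {N : Submodule ℤ (Fin 3 → ℤ)} (hN : finrank ℤ N = 2) :
    ∃ P : GL (Fin 3) ℤ, ∃ a n : ℤ, a ≠ 0 ∧ n ≠ 0 ∧
      N = Submodule.span ℤ {a • P.1.row 1, (n * a) • P.1.row 2} := by
  obtain ⟨b, a, n, ha, hn, hb⟩ := exists_basis_eq_span_pair (Pi.basisFun ℤ (Fin 3))
    (show (1 : Fin 3) ≠ 2 by decide) hN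
  have hunit : IsUnit ((Pi.basisFun ℤ (Fin 3)).toMatrix b) := by
    have := (Pi.basisFun ℤ (Fin 3)).invertibleToMatrix b
    exact isUnit_of_invertible _
  exact ⟨((isUnit_transpose _).mpr hunit).unit, a, n, ha, hn, hb⟩

theorem vecMulVec_conj {n R : Type*} [Fintype n] [DecidableEq n] [CommRing R] (C : GL n R)
    (η r : n → R) :
    C.1 * (1 + vecMulVec η r) * C⁻¹.1 = 1 + vecMulVec (C.1 *ᵥ η) (r ᵥ* C⁻¹.1) := by
  rw [mul_add, add_mul, mul_one, Matrix.mul_vecMulVec, Matrix.vecMulVec_mul, Units.mul_inv]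

theorem row_vecMul_inv {n R : Type*} [Fintype n] [DecidableEq n] [CommRing R] (C : GL n R) (i : n) :
    C.1.row i ᵥ* C⁻¹.1 = Pi.single i 1 := by
  change (C.1 * C⁻¹.1) i = _
  rw [Units.mul_inv]
  exact funext fun j ↦ by simp only [one_apply, Pi.single_apply, eq_comm]

variable {T : Type*} [AddCommGroup T] {W : T →ₗ[ℤ] E3} {η : E3}

theorem exists_intLinearMap_eq_smul (hη : η ≠ 0)
    (hint : ∀ x i j, ∃ m : ℤ, (1 + vecMulVec η (W x)) i j = m) :
    ∃ c : ℝ, c ≠ 0 ∧ ∃ w : T →ₗ[ℤ] (Fin 3 → ℤ), ∀ x, (fun j ↦ (w x j : ℝ)) = c • W x := by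
  obtain ⟨i, hi⟩ := Function.ne_iff.mp hη
  have hmem (x : T) (j : Fin 3) : ∃ m : ℤ, (m : ℝ) = η i * W x j := by
    obtain ⟨m, hm⟩ := hint x i j
    refine ⟨m - (1 : Matrix (Fin 3) (Fin 3) ℤ) i j, ?_⟩
    rw [Int.cast_sub, ← hm, Matrix.add_apply, vecMulVec_apply, one_apply, one_apply]
    split_ifs <;> simp
  choose w hw using hmem
  have hw_add (x y : T) : w (x + y) = w x + w y := funext fun j ↦ Int.cast_injective (α := ℝ) <| by
    rw [Pi.add_apply, Int.cast_add, hw, hw, hw, map_add, Pi.add_apply, mul_add]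
  exact ⟨η i, hi, (AddMonoidHom.mk' w hw_add).toIntLinearMap, fun x ↦ funext (hw x)⟩

theorem exists_rows_eq_smul (hT : finrank ℤ T = 2) (hW : Function.Injective W) {c : ℝ} (hc : c ≠ 0)
    {w : T →ₗ[ℤ] (Fin 3 → ℤ)} (hw : ∀ x, (fun j ↦ (w x j : ℝ)) = c • W x) :
    ∃ P ∈ integralGL, ∃ x y : T, ∃ r : ℝ, ∃ n : ℤ, r ≠ 0 ∧ n ≠ 0 ∧
      Submodule.span ℤ {x, y} = ⊤ ∧ W x = r • P.1.row 1 ∧ W y = (n * r) • P.1.row 2 := by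
  have hw_inj : Function.Injective w := fun x y h ↦ hW <| smul_right_injective E3 hc <| by
    simp only [← hw, h]
  obtain ⟨P, a, n, ha, hn, hrange⟩ :=
    exists_GL_rows_eq_span (N := LinearMap.range w)
      (by rw [LinearMap.finrank_range_of_inj hw_inj, hT])
  obtain ⟨x, hx⟩ : a • P.1.row 1 ∈ LinearMap.range w := hrange ▸ Submodule.subset_span (by simp)
  obtain ⟨y, hy⟩ : (n * a) • P.1.row 2 ∈ LinearMap.range w :=
    hrange ▸ Submodule.subset_span (by simp)
  refine ⟨_, ⟨P, rfl⟩, x, y, c⁻¹ * a, n, mul_ne_zero (inv_ne_zero hc) (Int.cast_ne_zero.mpr ha), hn,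
    ?_, ?_, ?_⟩
  · apply Submodule.map_injective_of_injective hw_inj
    rw [Submodule.map_span, Set.image_pair, hx, hy, ← hrange, Submodule.map_top]
  · refine smul_right_injective E3 hc (?_ : c • W x = _)
    rw [← hw, hx]
    funext j
    simp
    field_simp
  · refine smul_right_injective E3 hc (?_ : c • W y = _)
    rw [← hw, hy]
    funext j
    simp
    field_simp

theorem conj_eq_of_smul_eq (C : GL (Fin 3) ℝ) {η r : E3} {z a b : ℝ}
    (hη : C.1 *ᵥ η = z • Pi.single 0 1) (hr : z • r = a • C.1.row 1 + b • C.1.row 2) :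
    C.1 * (1 + vecMulVec η r) * C⁻¹.1 = !![1, a, b; 0, 1, 0; 0, 0, 1] := by
  rw [vecMulVec_conj, hη, smul_vecMulVec, ← vecMulVec_smul, ← smul_vecMul, hr, add_vecMul,
    smul_vecMul, smul_vecMul, row_vecMul_inv, row_vecMul_inv]
  ext i j
  fin_cases i <;> fin_cases j <;> simp [vecMulVec_apply]

theorem exists_mulVec_eq_smul_single (hT : finrank ℤ T = 2) (hW : Function.Injective W)
    (hη : η ≠ 0) (hker : ∀ x, W x ⬝ᵥ η = 0)
    (hint : ∀ x, ∃ B ∈ integralGL, B.1 = 1 + vecMulVec η (W x)) :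
    ∃ P ∈ integralGL, ∃ x y : T, ∃ z : ℝ, ∃ a n : ℤ, a ≠ 0 ∧ n ≠ 0 ∧
      Submodule.span ℤ {x, y} = ⊤ ∧ P.1 *ᵥ η = z • Pi.single 0 1 ∧
      z • W x = (a : ℝ) • P.1.row 1 ∧ z • W y = (n * a : ℝ) • P.1.row 2 := by
  obtain ⟨c, hc, w, hw⟩ := exists_intLinearMap_eq_smul hη fun x i j ↦ by
    obtain ⟨B, hB, hBx⟩ := hint x
    exact hBx ▸ exists_intCast_eq_of_mem_integralGL hB i j
  obtain ⟨P, hP, x, y, r, n, hr, hn, hspan, hx, hy⟩ := exists_rows_eq_smul hT hW hc hw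
  have hPη : P.1 *ᵥ η = (P.1 *ᵥ η) 0 • Pi.single 0 1 := by
    have h1 : P.1.row 1 ⬝ᵥ η = 0 := by
      simpa only [hx, smul_dotProduct, smul_eq_mul, mul_eq_zero, hr, false_or]
        using hker x
    have h2 : P.1.row 2 ⬝ᵥ η = 0 := by 
      simpa only [hy, smul_dotProduct, smul_eq_mul, mul_eq_zero, Int.cast_eq_zero, hn, hr, false_or]
        using hker y
    funext i
    fin_cases i
    exacts [by simp, h1.trans (by simp), h2.trans (by simp)]
  set z := (P.1 *ᵥ η) 0
  have hz : z ≠ 0 := by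
    intro hz
    rw [hz, zero_smul] at hPη
    exact hη (by simpa using congrArg (P⁻¹.1 *ᵥ ·) hPη)
  obtain ⟨B, hB, hBx⟩ := hint x
  obtain ⟨a, ha⟩ := exists_intCast_eq_of_mem_integralGL
    (mul_mem (mul_mem hP hB) (inv_mem hP)) 0 1
  have hconj := conj_eq_of_smul_eq P (r := W x) (a := z * r) (b := 0) hPη (by rw [hx]; module)
  have hzr : z * r = a := by
    rw [← ha, Units.val_mul, Units.val_mul, hBx, hconj]
    simp
  refine ⟨P, hP, x, y, z, a, n, ?_, hn, hspan, hPη, ?_, ?_⟩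
  · exact_mod_cast hzr ▸ mul_ne_zero hz hr
  · rw [hx, smul_smul, hzr]
  · rw [hy, smul_smul, ← hzr, mul_left_comm]

theorem exists_conj_eq_intCast (hT : finrank ℤ T = 2) (hW : Function.Injective W)
    (hη : η ≠ 0) (hker : ∀ x, W x ⬝ᵥ η = 0)
    (hint : ∀ x, ∃ B ∈ integralGL, B.1 = 1 + vecMulVec η (W x)) :
    ∃ P ∈ integralGL, (∃ z : ℝ, P.1 *ᵥ η = z • Pi.single 0 1) ∧
      ∃ x y : T, Submodule.span ℤ {x, y} = ⊤ ∧ ∃ a n : ℤ, 0 < a ∧ 0 < n ∧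
        ∀ m k : ℤ, P.1 * (1 + vecMulVec η (W (m • x + k • y))) * P⁻¹.1 =
          !![1, (m * a : ℝ), (k * (n * a) : ℝ); 0, 1, 0; 0, 0, 1] := by
  obtain ⟨P, hP, x, y, z, a, n, ha, hn, hspan, hPη, hx, hy⟩ :=
    exists_mulVec_eq_smul_single hT hW hη hker hint
  obtain ⟨ε, hε⟩ := Int.associated_natAbs a
  obtain ⟨δ, hδ⟩ := Int.associated_natAbs (n * a)
  refine ⟨P, hP, ⟨z, hPη⟩, (ε : ℤ) • x, (δ : ℤ) • y, ?_, |a|, |n|, abs_pos.mpr ha,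
    abs_pos.mpr hn, fun m k ↦ conj_eq_of_smul_eq P hPη ?_⟩
  · rw [Submodule.span_insert, Submodule.span_singleton_smul_eq ε.isUnit,
      Submodule.span_singleton_smul_eq δ.isUnit, ← Submodule.span_insert, hspan]
  · have hεr : (ε : ℝ) * a = |a| := by
      rw [mul_comm, ← Int.natCast_natAbs]
      exact_mod_cast hε
    have hδr : (δ : ℝ) * (n * a) = |n| * |a| := by
      rw [mul_comm, ← Int.cast_mul |n|, ← abs_mul, ← Int.natCast_natAbs]
      exact_mod_cast hδ
    simp only [map_add, map_zsmul, ← Int.cast_smul_eq_zsmul ℝ]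
    linear_combination (norm := module) (m * ε : ℝ) • hx + (k * δ : ℝ) • hy +
      (m * hεr) • P.1.row 1 + (k * hδr) • P.1.row 2

end IntegralUnipotents

namespace Sol

variable {lam : ℝ} {C : GL (Fin 3) ℝ} {Δ : Subgroup Sol}

/-- The linear holonomy representation of `Sol` on `ℝ³`, after an affine change of coordinates with
linear part `C`. -/
def linRep (lam : ℝ) (C : GL (Fin 3) ℝ) : Sol →* GL (Fin 3) ℝ :=
  (MulAut.conj C).toMonoidHom.comp (linearPart.comp (toAff lam))

theorem coe_linRep (p : Sol) : (linRep lam C p).1 = C.1 * linMatrix lam p * C⁻¹.1 := by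
  rw [← linearPart_toAff]
  rfl

theorem linRep_mul (P : GL (Fin 3) ℝ) (p : Sol) :
    linRep lam (P * C) p = P * linRep lam C p * P⁻¹ := by
  simp [linRep, mul_assoc]

theorem trace_linRep (p : Sol) : (linRep lam C p).1.trace = 1 + 2 * Real.cosh p.s := by
  rw [coe_linRep, trace_mul_cycle, Units.inv_mul, one_mul, Real.cosh_eq]
  simp [linMatrix, trace_fin_three]
  ring

theorem det_linRep (p : Sol) : (linRep lam C p).1.det = 1 := by
  rw [coe_linRep, det_mul_right_comm, Units.mul_inv, one_mul, det_fin_three]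
  simp [linMatrix, ← Real.exp_add]

theorem linRep_mulVec (p : Sol) :
    (linRep lam C p).1 *ᵥ (C.1 *ᵥ Pi.single 0 1) = C.1 *ᵥ Pi.single 0 1 := by
  have hfix : linMatrix lam p *ᵥ Pi.single 0 1 = Pi.single 0 1 := by
    funext i
    fin_cases i <;> simp [linMatrix]
  rw [coe_linRep, mulVec_mulVec, Units.inv_mul_cancel_right, ← mulVec_mulVec, hfix]

theorem mulVec_single_ne_zero (C : GL (Fin 3) ℝ) : C.1 *ᵥ Pi.single 0 1 ≠ 0 := fun h ↦ by
  simpa using mulVec_injective_of_isUnit C.isUnit (h.trans (mulVec_zero _).symm)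

theorem linRep_mulVec_single {z : ℝ} (hC : C.1 *ᵥ Pi.single 0 1 = z • Pi.single 0 1) (p : Sol) :
    (linRep lam C p).1 *ᵥ Pi.single 0 1 = Pi.single 0 1 := by
  have hz : z ≠ 0 := by
    rintro rfl
    exact mulVec_single_ne_zero C (hC.trans (zero_smul ℝ _))
  have := linRep_mulVec (lam := lam) (C := C) p
  rw [hC, mulVec_smul] at this
  exact smul_right_injective E3 hz this

/-- The linear form `r` on `ℝ³` for which the element of `Sol` with coordinates `(0, t, u)` has
linear part `1 + e₀ ⊗ r`. -/
def planeRow (lam : ℝ) : ℝ × ℝ →ₗ[ℝ] E3 where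
  toFun x := ![0, lam * x.2, lam * x.1]
  map_add' x y := by simp [mul_add]
  map_smul' c x := by simp [mul_left_comm]

theorem linMatrix_ofPlane (x : ℝ × ℝ) :
    linMatrix lam (ofPlane (.ofAdd x)) = 1 + vecMulVec (Pi.single 0 1) (planeRow lam x) := by
  ext i j
  fin_cases i <;> fin_cases j <;> simp [linMatrix, ofPlane, planeRow]

theorem planeRow_injective (hlam : lam ≠ 0) : Function.Injective (planeRow lam) := fun _ _ h ↦
  Prod.ext (mul_left_cancel₀ hlam (congrFun h 2)) (mul_left_cancel₀ hlam (congrFun h 1))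

theorem exists_map_sHom_eq_zpowers_of_linRep (hint : ∀ p ∈ Δ, linRep lam C p ∈ integralGL) :
    ∃ g ∈ Δ, Δ.map sHom = Subgroup.zpowers (sHom g) := by
  refine exists_map_sHom_eq_zpowers fun p hp ↦ ?_
  obtain ⟨B, hB⟩ := hint p hp
  refine ⟨B.1.trace, ?_⟩
  rw [← trace_linRep (lam := lam) (C := C), ← hB]
  exact AddMonoidHom.map_trace (Int.castAddHom ℝ) B.1

theorem exists_linRep_ofPlane_eq (hlam : lam ≠ 0)
    (hΔ : Module.finrank ℤ (planeLattice Δ) = 2)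
    (hint : ∀ p ∈ Δ, linRep lam C p ∈ integralGL) :
    ∃ P ∈ integralGL, (∃ z : ℝ, (P * C).1 *ᵥ Pi.single 0 1 = z • Pi.single 0 1) ∧
      ∃ x y : ℝ × ℝ, planeLattice Δ = Submodule.span ℤ {x, y} ∧ ∃ a n : ℤ, 0 < a ∧ 0 < n ∧
        ∀ m k : ℤ, (linRep lam (P * C) (ofPlane (.ofAdd (m • x + k • y)))).1 =
          !![1, (m * a : ℝ), (k * (n * a) : ℝ); 0, 1, 0; 0, 0, 1] := by
  let W : planeLattice Δ →ₗ[ℤ] E3 :=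
    ((vecMulLinear C⁻¹.1).comp (planeRow lam)).restrictScalars ℤ ∘ₗ (planeLattice Δ).subtype
  have hlin (x : ℝ × ℝ) : (linRep lam C (ofPlane (.ofAdd x))).1 =
      1 + vecMulVec (C.1 *ᵥ Pi.single 0 1) (planeRow lam x ᵥ* C⁻¹.1) := by
    rw [coe_linRep, linMatrix_ofPlane, vecMulVec_conj]
  have hW : Function.Injective W := (vecMul_injective_of_isUnit C⁻¹.isUnit).comp
    ((planeRow_injective hlam).comp Subtype.val_injective)
  have hη : C.1 *ᵥ Pi.single (0 : Fin 3) (1 : ℝ) ≠ 0 := 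
    mulVec_single_ne_zero C
  have hker (x : planeLattice Δ) : W x ⬝ᵥ C.1 *ᵥ Pi.single 0 1 = 0 := by
    change (planeRow lam x ᵥ* C⁻¹.1) ⬝ᵥ _ = 0
    rw [← dotProduct_mulVec, mulVec_mulVec, Units.inv_mul, one_mulVec, dotProduct_single, mul_one]
    rfl
  obtain ⟨P, hP, hPη, x, y, hxy, a, n, ha, hn, hconj⟩ := exists_conj_eq_intCast hΔ hW hη hker
    fun x ↦ ⟨_, hint _ (mem_planeLattice.mp x.2), hlin x⟩
  refine ⟨P, hP, by simpa only [Units.val_mul, mulVec_mulVec] using hPη, x, y, ?_,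
    a, n, ha, hn, fun m k ↦ ?_⟩
  · simpa only [Submodule.map_span, Set.image_pair, Submodule.subtype_apply,
      Submodule.map_subtype_top] using (congrArg (Submodule.map (planeLattice Δ).subtype) hxy).symm
  · rw [linRep_mul, ← hconj m k, Units.val_mul, Units.val_mul, hlin]
    rfl

theorem exists_intCast_of_mulVec_single {A : GL (Fin 3) ℝ} (hA : A ∈ integralGL)
    (hfix : A.1 *ᵥ Pi.single 0 1 = Pi.single 0 1) (hdet : A.1.det = 1) :
    ∃ p q a b c d : ℤ, A.1 = !![1, (p : ℝ), q; 0, a, b; 0, c, d] ∧ a * d - b * c = 1 := by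
  choose B hB using exists_intCast_eq_of_mem_integralGL hA
  have hcol (i : Fin 3) : A.1 i 0 = (Pi.single 0 1 : E3) i := by
    simpa using congrFun hfix i
  have hA_eq : A.1 = !![1, (B 0 1 : ℝ), B 0 2; 0, B 1 1, B 1 2; 0, B 2 1, B 2 2] := by
    ext i j
    fin_cases j
    · fin_cases i <;> simp [hcol]
    all_goals fin_cases i <;> simp [hB]
  refine ⟨_, _, _, _, _, _, hA_eq, ?_⟩
  have hdet' : (B 1 1 * B 2 2 - B 1 2 * B 2 1 : ℝ) = 1 := by
    simpa [hA_eq, det_fin_three] using hdet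
  exact_mod_cast hdet'

theorem eq_mul_of_unipotent_mul_eq_mul {p q a b c d a₁ n m k : ℤ} (ha₁ : a₁ ≠ 0)
    (h : (!![1, (a₁ : ℝ), 0; 0, 1, 0; 0, 0, 1] : Matrix (Fin 3) (Fin 3) ℝ) *
        !![1, (p : ℝ), q; 0, a, b; 0, c, d] =
      !![1, (p : ℝ), q; 0, a, b; 0, c, d] * !![1, (m * a₁ : ℝ), k * (n * a₁); 0, 1, 0; 0, 0, 1]) :
    b = k * n := by
  have h02 : (q + a₁ * b : ℝ) = k * (n * a₁) + q := by
    simpa [mul_apply, Fin.sum_univ_three] using congrFun (congrFun h 0) 2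
  have h02' : q + a₁ * b = k * (n * a₁) + q := by exact_mod_cast h02
  exact mul_left_cancel₀ ha₁ (by linear_combination h02')

theorem exists_mul_mul_eq {g : Sol} (hg : g ∈ Δ) {x y : ℝ × ℝ}
    (hxy : planeLattice Δ = Submodule.span ℤ {x, y}) :
    ∃ m k : ℤ, ofPlane (.ofAdd x) * g = g * ofPlane (.ofAdd (m • x + k • y)) := by
  have hx : ofPlane (.ofAdd x) ∈ Δ :=
    mem_planeLattice.mp (hxy ▸ Submodule.subset_span (Set.mem_insert _ _))
  have hker : g⁻¹ * (ofPlane (.ofAdd x) * g) ∈ sHom.ker := by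
    simpa only [mul_assoc] using
      sHom.normal_ker.conj_mem' _ (range_ofPlane.le (MonoidHom.mem_range.mpr ⟨.ofAdd x, rfl⟩)) g
  obtain ⟨τ, hτ⟩ := range_ofPlane.ge hker
  have hτΔ : τ.toAdd ∈ planeLattice Δ :=
    mem_planeLattice.mpr (hτ ▸ mul_mem (inv_mem hg) (mul_mem hx hg))
  obtain ⟨m, k, hmk⟩ := Submodule.mem_span_pair.mp (hxy ▸ hτΔ)
  exact ⟨m, k, by rw [hmk, ofAdd_toAdd, hτ, mul_inv_cancel_left]⟩

theorem exists_linRep_eq (hlam : lam ≠ 0) (hΔ : Module.finrank ℤ (planeLattice Δ) = 2)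
    (hint : ∀ p ∈ Δ, linRep lam C p ∈ integralGL) :
    ∃ P ∈ integralGL, ∃ g h₁ h₂ : Sol, Δ = Subgroup.closure {g, h₁, h₂} ∧
      ∃ p q a b c d a₁ n k : ℤ, 0 < a₁ ∧ 0 < n ∧ a * d - b * c = 1 ∧ b = k * n ∧
        (linRep lam (P * C) g).1 = !![1, (p : ℝ), q; 0, a, b; 0, c, d] ∧
        (linRep lam (P * C) h₁).1 = !![1, (a₁ : ℝ), 0; 0, 1, 0; 0, 0, 1] ∧
        (linRep lam (P * C) h₂).1 = !![1, 0, (n * a₁ : ℝ); 0, 1, 0; 0, 0, 1] := by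
  obtain ⟨g, hg, hs⟩ := exists_map_sHom_eq_zpowers_of_linRep hint
  obtain ⟨P, hP, ⟨z, hz⟩, x, y, hxy, a₁, n, ha₁, hn, hplane⟩ :=
    exists_linRep_ofPlane_eq hlam hΔ hint
  have hgint : linRep lam (P * C) g ∈ integralGL :=
    linRep_mul (C := C) P g ▸ mul_mem (mul_mem hP (hint g hg)) (inv_mem hP)
  obtain ⟨p, q, a, b, c, d, hgmat, hdet⟩ :=
    exists_intCast_of_mulVec_single hgint (linRep_mulVec_single hz g) (det_linRep g)
  have hx : (linRep lam (P * C) (ofPlane (.ofAdd x))).1 = !![1, (a₁ : ℝ), 0; 0, 1, 0; 0, 0, 1] := by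
    simpa using hplane 1 0
  have hy : (linRep lam (P * C) (ofPlane (.ofAdd y))).1 =
      !![1, 0, (n * a₁ : ℝ); 0, 1, 0; 0, 0, 1] := by
    simpa using hplane 0 1
  obtain ⟨m, k, hmk⟩ := exists_mul_mul_eq hg hxy
  have hconj := congrArg (fun p ↦ (linRep lam (P * C) p).1) hmk
  simp only [map_mul (linRep lam (P * C)), Units.val_mul, hx, hgmat, hplane] at hconj
  exact ⟨P, hP, g, _, _, eq_closure_of_planeLattice_eq_span hg hs.le hxy, p, q, a, b, c, d, a₁, n,
    k, ha₁, hn, hdet, eq_mul_of_unipotent_mul_eq_mul ha₁.ne' hconj, hgmat, hx, hy⟩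

end Sol

theorem map_conj_eq_closure_image {G H : Type*} [Group G] [Group H] {f : H →* G} {Γ : Subgroup G}
    {Δ : Subgroup H} {φ : G} (h : Γ.map (MulAut.conj φ).toMonoidHom = Δ.map f) {S : Set H}
    (hS : Δ = Subgroup.closure S) (ψ : G) :
    Γ.map (MulAut.conj ψ).toMonoidHom =
      Subgroup.closure ((fun p ↦ MulAut.conj (ψ * φ⁻¹) (f p)) '' S) := by
  have hψ : (MulAut.conj ψ).toMonoidHom =
      (MulAut.conj (ψ * φ⁻¹)).toMonoidHom.comp (MulAut.conj φ).toMonoidHom :=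
    MonoidHom.ext fun γ ↦ by simp [mul_assoc]
  rw [hψ, ← Subgroup.map_map, h, hS, Subgroup.map_map, MonoidHom.map_closure]
  rfl
theorem exists_discreteTopology_map_toAff_eq {lam : ℝ} {Γ : Subgroup AffT}
    (hΓ : ∀ γ ∈ Γ, ∃ s t u : ℝ, ∀ x, γ x = Ifam lam s t u x)
    (hdisc : DiscreteTopology
      {p : ℝ × ℝ × ℝ | ∃ γ ∈ Γ, ∀ x, γ x = Ifam lam p.1 p.2.1 p.2.2 x}) :
    ∃ Δ : Subgroup Sol, DiscreteTopology Δ ∧ Γ = Δ.map (Sol.toAff lam) := by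
  refine ⟨Γ.comap (Sol.toAff lam), ?_, (Subgroup.map_comap_eq_self fun γ hγ ↦ ?_).symm⟩
  · exact DiscreteTopology.of_continuous_injective
      (f := fun p : Γ.comap (Sol.toAff lam) ↦
        (⟨Sol.equivProd p, Sol.toAff lam p, p.2, fun _ ↦ rfl⟩ :
          {p : ℝ × ℝ × ℝ | ∃ γ ∈ Γ, ∀ x, γ x = Ifam lam p.1 p.2.1 p.2.2 x}))
      ((Sol.isInducing_equivProd.continuous.comp continuous_subtype_val).subtype_mk _)
      fun p q h ↦ Subtype.ext (Sol.equivProd.injective (congrArg Subtype.val h))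
  · obtain ⟨s, t, u, h⟩ := hΓ γ hγ
    exact ⟨⟨s, t, u⟩, AffineEquiv.ext fun x ↦ (h x).symm⟩

theorem linearPart_mem_integralGL {γ : AffT} {B : Matrix (Fin 3) (Fin 3) ℤ} (hB : IsUnit B) {v : E3}
    (h : HasForm γ (B.map (Int.cast : ℤ → ℝ)) v) : linearPart γ ∈ integralGL :=
  ⟨hB.unit, Units.ext (hasForm_iff.mp h).1.symm⟩

theorem linearPart_conj_toAff (lam : ℝ) (φ : AffT) (p : Sol) :
    linearPart (MulAut.conj φ (Sol.toAff lam p)) = Sol.linRep lam (linearPart φ) p := by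
  simp [Sol.linRep]

namespace Sol

open Pointwise

variable {lam : ℝ} {Δ : Subgroup Sol}

theorem linRep_mem_integralGL {Γ : Subgroup AffT} {φ : AffT}
    (hΓ : ∀ γ ∈ Γ, linearPart γ ∈ integralGL)
    (hΔ : Γ.map (MulAut.conj φ).toMonoidHom = Δ.map (toAff lam)) :
    ∀ p ∈ Δ, linRep lam (linearPart φ⁻¹) p ∈ integralGL := by
  intro p hp
  obtain ⟨γ, hγ, hγp⟩ := hΔ.ge (Subgroup.mem_map_of_mem (toAff lam) hp)
  rw [← linearPart_conj_toAff, ← hγp]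
  simpa [mul_assoc] using hΓ γ hγ

theorem finrank_planeLattice_of_linRep [DiscreteTopology Δ] {C : GL (Fin 3) ℝ}
    (hint : ∀ p ∈ Δ, linRep lam C p ∈ integralGL)
    (hK : ∃ K : Set Sol, IsCompact K ∧ (Δ : Set Sol) * K = Set.univ) :
    Module.finrank ℤ (planeLattice Δ) = 2 := by
  obtain ⟨g, -, hs⟩ := exists_map_sHom_eq_zpowers_of_linRep hint
  have : DiscreteTopology (Δ.map sHom) := hs ▸ discreteTopology_zpowers _
  obtain ⟨K, hK, hΔK⟩ := hK
  exact finrank_planeLattice hK hΔK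

end Sol

/-- normal form of an integral affine group conjugate to a discrete subgroup of
`I_λ` with `λ ≠ 0` and compact quotient. -/
theorem stmt_17 (lam : ℝ) (hlam : lam ≠ 0) (Γ : Subgroup AffT)
    (hint : ∀ γ ∈ Γ, ∃ B : Matrix (Fin 3) (Fin 3) ℤ, IsUnit B ∧
      ∃ v : E3, HasForm γ (B.map (Int.cast : ℤ → ℝ)) v)
    (φ : AffT)
    (hconj : ∀ γ ∈ Subgroup.map (MulAut.conj φ).toMonoidHom Γ,
      ∃ s t u : ℝ, ∀ x, γ x = Ifam lam s t u x)
    (hdisc : DiscreteTopology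
      {p : ℝ × ℝ × ℝ | ∃ γ ∈ Subgroup.map (MulAut.conj φ).toMonoidHom Γ,
        ∀ x, γ x = Ifam lam p.1 p.2.1 p.2.2 x})
    (hcomp : HasCompactQuotient Γ) :
    ∃ P : Matrix (Fin 3) (Fin 3) ℤ, IsUnit P ∧ ∃ (w : E3) (ψ : AffT),
      (∀ x, ψ x = (P.map (Int.cast : ℤ → ℝ)).mulVec x + w) ∧
      ∃ p q a b c d a₁ n : ℤ, 0 < a₁ ∧ 0 < n ∧
        ∃ (v₁ v₂ v₃ : E3) (g h₁ h₂ : AffT),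
          HasForm g !![1, (p : ℝ), (q : ℝ); 0, (a : ℝ), (b : ℝ); 0, (c : ℝ), (d : ℝ)] v₁ ∧
          HasForm h₁ !![1, (a₁ : ℝ), 0; 0, 1, 0; 0, 0, 1] v₂ ∧
          HasForm h₂ !![1, 0, ((n * a₁ : ℤ) : ℝ); 0, 1, 0; 0, 0, 1] v₃ ∧
          Subgroup.map (MulAut.conj ψ).toMonoidHom Γ = Subgroup.closure {g, h₁, h₂} ∧
          ∃ A : Matrix (Fin 2) (Fin 2) ℤ, A.det = 1 ∧
            !![a₁, 0; 0, n * a₁] * !![a, b; c, d] = A * !![a₁, 0; 0, n * a₁] := by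
  obtain ⟨Δ, _, hΔ⟩ := exists_discreteTopology_map_toAff_eq hconj hdisc
  have hΔint : ∀ p ∈ Δ, Sol.linRep lam (linearPart φ⁻¹) p ∈ integralGL :=
    Sol.linRep_mem_integralGL (fun γ hγ ↦
      have ⟨_, hB, _, hγB⟩ := hint γ hγ
      linearPart_mem_integralGL hB hγB) hΔ
  have hrank := Sol.finrank_planeLattice_of_linRep hΔint (Sol.exists_isCompact_mul_eq_univ hcomp hΔ)
  obtain ⟨_, ⟨P, rfl⟩, g, h₁, h₂, hgen, p, q, a, b, c, d, a₁, n, k, ha₁, hn, hdet, rfl, hg, hh₁,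
    hh₂⟩ := Sol.exists_linRep_eq hlam hrank hΔint
  obtain ⟨ψ, hψ, hψ0⟩ := exists_linearPart_eq (GeneralLinearGroup.map (Int.castRingHom ℝ) P) 0
  rw [← hψ, ← map_mul] at hg hh₁ hh₂
  simp only [← linearPart_conj_toAff] at hg hh₁ hh₂
  refine ⟨P, P.isUnit, 0, ψ, hasForm_iff.mpr ⟨congrArg Units.val hψ, hψ0⟩, p, q, a, k * n,
    c, d, a₁, n, ha₁, hn, _, _, _, _, _, _, hasForm_iff.mpr ⟨hg, rfl⟩,
    hasForm_iff.mpr ⟨hh₁, rfl⟩, hasForm_iff.mpr ⟨by exact_mod_cast hh₂, rfl⟩, ?_,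
    !![a, k; n * c, d], ?_, ?_⟩
  · rw [map_conj_eq_closure_image hΔ hgen, Set.image_insert_eq, Set.image_pair]
  · rw [det_fin_two_of, ← hdet]
    ring
  · ext i j
    fin_cases i <;> fin_cases j <;> simp <;> ring
end
end
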